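/- The weight-four Eisenstein series 𝒬 on Γ₀(2) satisfies the third-order nonlinear ODE: for every τ ∈ ℍ, 4𝒬⁴(𝒬''')² − 6𝒬²𝒬'(6𝒬𝒬'' − 5(𝒬')²)𝒬''' + 16𝒬³(𝒬'')³ + 𝒬²(21(𝒬')² − 4𝒬³)(𝒬'')² − 10𝒬(𝒬')²(6(𝒬')² − 𝒬³)𝒬'' + 25(𝒬')⁶ − (25/4)𝒬³(𝒬')⁴ = 0. -/

import Mathlib

open Complex

noncomputable section

/-- The normalized derivative `F' = (2πi)⁻¹ dF/dτ`. -/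
def nderiv (F : ℂ → ℂ) : ℂ → ℂ := fun τ => (2 * Real.pi * Complex.I)⁻¹ * deriv F τ

/-- `q = e^{2πiτ}`. -/
def qq (τ : ℂ) : ℂ := Complex.exp (2 * Real.pi * Complex.I * τ)

/-- The level-two Eisenstein series `𝒬(τ) = 1 + 16 Σ_{n≥1} (−1)ⁿ n³ qⁿ/(1−qⁿ)`. -/
def EQ : ℂ → ℂ := fun τ =>
  1 + 16 * ∑' n : ℕ, (-1 : ℂ) ^ (n + 1) * ((n : ℂ) + 1) ^ 3 * qq τ ^ (n + 1) / (1 - qq τ ^ (n + 1))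

/-!
A weight-`k` form on `Γ₀(2)` with `k < 8` that vanishes at both cusps is zero: the product of its
translates over the three cosets of `Γ₀(2)` has level one, weight `3k` and, by the `q`-expansion at
`∞`, decays faster than `Δ`, so its quotient by `Δ` is a level-one cusp form of weight
`3k - 12 < 12`. Hence identities in weights four and six on `Γ₀(2)` can be checked at the two cusps.

With `e = 2 E₂(2τ) - E₂(τ)`, `u = E₂ - e` and `v = e² - 𝒬`, three such identities give
`𝒬' = u 𝒬 / 3`, `u' = (u² - 9 v) / 12`, `e' = u e / 6 + v / 2` and `v' = v (u / 3 + e)`, so that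
`36 𝒬'' = 𝒬 (5 u² - 9 v)` and `72 𝒬''' = 𝒬 (5 u³ - 27 u v - 18 v e)`. These three equations express
`u`, `v` and `v e` through `𝒬` and its derivatives, and the differential equation is the relation
`(v e)² = v² (v + 𝒬)` with denominators cleared.
-/

open UpperHalfPlane hiding I
open ModularForm ModularGroup EisensteinSeries CongruenceSubgroup Derivative Filter Topology
open scoped MatrixGroups Manifold ArithmeticFunction.sigma

local notation "𝕢" => Function.Periodic.qParam

/-! ### Limits at `i∞` -/

lemma tendsto_atImInfty_of_hasSum_qParam_pow {f : ℍ → ℂ} {c : ℕ → ℂ} {h : ℝ} (hh : 0 < h)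
    (hf : ∀ τ : ℍ, HasSum (fun m ↦ c m • 𝕢 h τ ^ m) (f τ)) :
    Tendsto f atImInfty (𝓝 (c 0)) := by
  have hq : Tendsto (fun τ : ℍ ↦ 𝕢 h τ) atImInfty (𝓝 0) := qParam_tendsto_atImInfty hh
  have hc : ∑' m, c m • (0 : ℂ) ^ m = c 0 := by
    rw [tsum_eq_single 0 fun m hm ↦ by rw [zero_pow hm, smul_zero], pow_zero, smul_eq_mul, mul_one]
  rw [← hc, funext fun τ ↦ (hf τ).tsum_eq.symm]
  refine tendsto_tsum_of_dominated_convergence (hf UpperHalfPlane.I).summable.norm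
    (fun m ↦ (hq.pow m).const_smul (c m)) ?_
  have hI : 0 < ‖𝕢 h UpperHalfPlane.I‖ := norm_pos_iff.mpr (Function.Periodic.qParam_ne_zero _)
  filter_upwards [hq.norm.eventually_lt_const (by rwa [norm_zero])] with τ hτ m
  rw [norm_smul, norm_smul, norm_pow, norm_pow]
  gcongr

lemma tendsto_E2_atImInfty : Tendsto E2 atImInfty (𝓝 1) := by
  have hE2 (τ : ℍ) : HasSum
      (fun m : ℕ ↦ (if m = 0 then 1 else -24 * σ 1 m : ℂ) • 𝕢 1 τ ^ m) (E2 τ) := by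
    simpa only [Function.Periodic.qParam, ofReal_one, div_one] using hasSum_qExpansion_E2 (z := τ)
  exact tendsto_atImInfty_of_hasSum_qParam_pow one_pos hE2

lemma tendsto_E_atImInfty {k : ℕ} (hk : 3 ≤ k) (hk2 : Even k) :
    Tendsto (E hk) atImInfty (𝓝 1) := by
  rw [← E_qExpansion_coeff_zero hk hk2]
  exact tendsto_atImInfty_of_hasSum_qParam_pow one_pos fun τ ↦
    ModularForm.hasSum_qExpansion (E hk) one_pos one_mem_strictPeriods_SL τ

lemma tendsto_normalizedDerivOfComplex_atImInfty {f : ℍ → ℂ} (hf : MDiff f) {a : ℂ}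
    (ha : Tendsto f atImInfty (𝓝 a)) : Tendsto (D f) atImInfty (𝓝 0) := by
  suffices h : Tendsto (fun z : ℍ ↦ deriv (f ∘ ofComplex) z) atImInfty (𝓝 0) by
    rw [← mul_zero (2 * Real.pi * I)⁻¹]
    exact h.const_mul _
  refine Metric.tendsto_nhds.mpr fun ε hε ↦ ?_
  obtain ⟨B, -, hB⟩ := atImInfty_basis.eventually_iff.mp
    (Metric.tendsto_nhds.mp ha (ε / 2) (half_pos hε))
  refine atImInfty_basis.eventually_iff.mpr ⟨max B 0 + 2, trivial, fun z hz ↦ ?_⟩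
  have lt_im {w : ℂ} (hw : w ∈ Metric.closedBall (z : ℂ) 1) : max B 0 < w.im := by
    have := (abs_le.mp ((abs_im_le_norm (w - z)).trans (mem_closedBall_iff_norm.mp hw))).1
    rw [sub_im, coe_im] at this
    linarith [show max B 0 + 2 ≤ z.im from hz]
  have hdiff : DiffContOnCl ℂ (fun w ↦ (f ∘ ofComplex) w - a) (Metric.ball (z : ℂ) 1) := by
    refine DifferentiableOn.diffContOnCl ?_
    rw [closure_ball _ one_ne_zero]
    exact ((UpperHalfPlane.mdifferentiable_iff.mp hf).mono
      fun w hw ↦ (le_max_right B 0).trans_lt (lt_im hw)).sub_const a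
  have hbound (w) (hw : w ∈ Metric.sphere (z : ℂ) 1) : ‖(f ∘ ofComplex) w - a‖ ≤ ε / 2 := by
    have hw := lt_im (Metric.sphere_subset_closedBall hw)
    have hpos : 0 < w.im := (le_max_right B 0).trans_lt hw
    rw [Function.comp_apply, ofComplex_apply_of_im_pos hpos, ← dist_eq_norm]
    exact (hB (x := ⟨w, hpos⟩) ((le_max_left B 0).trans hw.le)).le
  have := norm_deriv_le_of_forall_mem_sphere_norm_le one_pos hdiff hbound
  rw [deriv_sub_const] at this
  rw [dist_zero_right]
  linarith

lemma tendsto_serreDerivative_atImInfty {f : ℍ → ℂ} (hf : MDiff f) {a : ℂ}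
    (ha : Tendsto f atImInfty (𝓝 a)) (k : ℂ) :
    Tendsto (serreDerivative k f) atImInfty (𝓝 (-k / 12 * a)) := by
  have := (tendsto_normalizedDerivOfComplex_atImInfty hf ha).sub
    ((tendsto_E2_atImInfty.const_mul (k * 12⁻¹)).mul ha)
  rwa [zero_sub, mul_one, ← neg_mul, ← div_eq_mul_inv, ← neg_div] at this

lemma tendsto_slash_atImInfty {g : GL (Fin 2) ℝ} (hdet : 0 < g.det.val) (hg : g 1 0 = 0) (k : ℤ)
    {f : ℍ → ℂ} {a : ℂ} (ha : Tendsto f atImInfty (𝓝 a)) :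
    Tendsto (f ∣[k] g) atImInfty (𝓝 (a * (g.det.val : ℂ) ^ (k - 1) * (g 1 1 : ℂ) ^ (-k))) := by
  have h (z : ℍ) : (f ∣[k] g) z = f (g • z) * (g.det.val : ℂ) ^ (k - 1) * (g 1 1 : ℂ) ^ (-k) := by
    rw [slash_apply, UpperHalfPlane.σ, if_pos hdet, abs_of_pos hdet, denom, hg]
    simp
  rw [funext h]
  exact ((ha.comp (tendsto_smul_atImInfty hg)).mul_const _).mul_const _

/-! ### Forms on `Γ₀(N)` -/

lemma eq_zero_of_slash_S_of_slash_T {k : ℤ} (hk : k < 12) {f : ℍ → ℂ} (hf : MDiff f)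
    (hS : f ∣[k] S = f) (hT : f ∣[k] T = f) (h0 : IsZeroAtImInfty f) : f = 0 := by
  have hγ (γ : SL(2, ℤ)) : f ∣[k] γ = f := SlashInvariantForm.slash_action_generators_SL2Z hS hT γ
  let F : CuspForm 𝒮ℒ k :=
    { toFun := f
      slash_action_eq' := by
        rintro _ ⟨γ, rfl⟩
        exact hγ γ
      holo' := hf
      zero_at_cusps' := fun hc ↦ by
        rw [Subgroup.IsArithmetic.isCusp_iff_isCusp_SL2Z] at hc
        refine (OnePoint.isZeroAt_iff_forall_SL2Z hc).mpr fun γ _ ↦ ?_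
        rwa [hγ] }
  have hF : F = 0 :=
    rank_zero_iff_forall_zero.mp (CuspForm.rank_eq_zero_of_weight_lt_twelve hk) F
  exact congrArg (⇑) hF

/-- `IsModularGamma0 N k f a b`: the function `f` is holomorphic on `ℍ`, invariant under `Γ₀(N)` in
weight `k`, and has the values `a` at the cusp `∞` and `b` at the cusp `0`, the latter being read
off from `f ∣[k] S`. For prime `N` there are no other cusps, so such an `f` is a modular form. -/
structure IsModularGamma0 (N : ℕ) (k : ℤ) (f : ℍ → ℂ) (a b : ℂ) : Prop where
  mdifferentiable : MDiff f
  slash_eq : ∀ γ ∈ Gamma0 N, f ∣[k] γ = f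
  tendsto_infty : Tendsto f atImInfty (𝓝 a)
  tendsto_zero : Tendsto (f ∣[k] S) atImInfty (𝓝 b)

/-- The norm of `f` from `Γ₀(2)` to `SL(2, ℤ)`: the product over the three cosets. -/
def cosetProd (k : ℤ) (f : ℍ → ℂ) : ℍ → ℂ := f * (f ∣[k] S) * (f ∣[k] (S * T))

namespace IsModularGamma0

variable {N : ℕ} {k l : ℤ} {f g : ℍ → ℂ} {a b c d : ℂ}

lemma sub (hf : IsModularGamma0 N k f a b) (hg : IsModularGamma0 N k g c d) :
    IsModularGamma0 N k (f - g) (a - c) (b - d) where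
  mdifferentiable := hf.mdifferentiable.sub hg.mdifferentiable
  slash_eq γ hγ := by
    rw [sub_eq_add_neg, SlashAction.add_slash, SlashAction.neg_slash, hf.slash_eq γ hγ,
      hg.slash_eq γ hγ]
  tendsto_infty := hf.tendsto_infty.sub hg.tendsto_infty
  tendsto_zero := by
    rw [sub_eq_add_neg, SlashAction.add_slash, SlashAction.neg_slash, ← sub_eq_add_neg]
    exact hf.tendsto_zero.sub hg.tendsto_zero

lemma const_smul (hf : IsModularGamma0 N k f a b) (r : ℂ) :
    IsModularGamma0 N k (r • f) (r * a) (r * b) where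
  mdifferentiable := hf.mdifferentiable.const_smul r
  slash_eq γ hγ := by rw [ModularForm.SL_smul_slash, hf.slash_eq γ hγ]
  tendsto_infty := hf.tendsto_infty.const_mul r
  tendsto_zero := by
    rw [ModularForm.SL_smul_slash]
    exact hf.tendsto_zero.const_mul r

lemma mul (hf : IsModularGamma0 N k f a b) (hg : IsModularGamma0 N l g c d) :
    IsModularGamma0 N (k + l) (f * g) (a * c) (b * d) where
  mdifferentiable := hf.mdifferentiable.mul hg.mdifferentiable
  slash_eq γ hγ := by rw [mul_slash_SL2, hf.slash_eq γ hγ, hg.slash_eq γ hγ]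
  tendsto_infty := hf.tendsto_infty.mul hg.tendsto_infty
  tendsto_zero := by
    rw [mul_slash_SL2]
    exact hf.tendsto_zero.mul hg.tendsto_zero

lemma serreDerivative (hf : IsModularGamma0 N k f a b) :
    IsModularGamma0 N (k + 2) (serreDerivative k f) (-k / 12 * a) (-k / 12 * b) where
  mdifferentiable := serreDerivative_mdifferentiable k hf.mdifferentiable
  slash_eq γ hγ := serreDerivative_slash_invariant hf.mdifferentiable (hf.slash_eq γ hγ)
  tendsto_infty := tendsto_serreDerivative_atImInfty hf.mdifferentiable hf.tendsto_infty k
  tendsto_zero := by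
    rw [serreDerivative_slash_equivariant hf.mdifferentiable]
    exact tendsto_serreDerivative_atImInfty (hf.mdifferentiable.slash k S) hf.tendsto_zero k

lemma isBigO_exp (hf : IsModularGamma0 N k f 0 b) :
    f =O[atImInfty] fun τ ↦ Real.exp (-2 * Real.pi * τ.im) := by
  let F : SlashInvariantForm (Gamma0 N : Subgroup (GL (Fin 2) ℝ)) k :=
    { toFun := f
      slash_action_eq' := by
        rintro _ ⟨γ, hγ, rfl⟩
        exact hf.slash_eq γ hγ }
  have one_mem : (1 : ℝ) ∈ (Gamma0 N : Subgroup (GL (Fin 2) ℝ)).strictPeriods := by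
    rw [Subgroup.strictPeriods_eq_zmultiples_one_of_T_mem (Gamma0_mem.mpr (by simp [T]))]
    exact AddSubgroup.mem_zmultiples 1
  have hper : Function.Periodic (f ∘ ofComplex) (1 : ℝ) :=
    SlashInvariantFormClass.periodic_comp_ofComplex F one_mem
  simpa only [div_one] using IsZeroAtImInfty.exp_decay_atImInfty hf.tendsto_infty one_pos hper
    hf.mdifferentiable (hf.tendsto_infty.isBigO_one ℝ)

lemma tendsto_slash_S_mul_T (hf : IsModularGamma0 N k f a b) :
    Tendsto (f ∣[k] (S * T)) atImInfty (𝓝 b) := by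
  rw [SlashAction.slash_mul]
  simpa [coe_T, SL_slash] using
    tendsto_slash_atImInfty (g := (T : GL (Fin 2) ℝ)) (by simp) (by simp [coe_T]) k hf.tendsto_zero

lemma cosetProd_slash_S (hf : IsModularGamma0 2 k f a b) :
    cosetProd k f ∣[k + k + k] S = cosetProd k f := by
  have hSS : (f ∣[k] S) ∣[k] S = f := by
    rw [← SlashAction.slash_mul, hf.slash_eq _ (Gamma0_mem.mpr (by decide))]
  have hSTS : (f ∣[k] (S * T)) ∣[k] S = f ∣[k] (S * T) := by
    have h : S * T * S = (S * T * S * (S * T)⁻¹) * (S * T) := by group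
    rw [← SlashAction.slash_mul, h, SlashAction.slash_mul,
      hf.slash_eq _ (Gamma0_mem.mpr (by decide))]
  rw [cosetProd, mul_slash_SL2, mul_slash_SL2, hSS, hSTS, mul_comm (f ∣[k] S) f]

lemma cosetProd_slash_T (hf : IsModularGamma0 2 k f a b) :
    cosetProd k f ∣[k + k + k] T = cosetProd k f := by
  have hSTT : (f ∣[k] (S * T)) ∣[k] T = f ∣[k] S := by
    have h : S * T * T = (S * T * T * S⁻¹) * S := by group
    rw [← SlashAction.slash_mul, h, SlashAction.slash_mul,
      hf.slash_eq _ (Gamma0_mem.mpr (by decide))]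
  rw [cosetProd, mul_slash_SL2, mul_slash_SL2, hSTT, hf.slash_eq T (Gamma0_mem.mpr (by decide)),
    ← SlashAction.slash_mul, mul_assoc, mul_comm (f ∣[k] (S * T)), mul_assoc]

lemma cosetProd_isLittleO_discriminant (hf : IsModularGamma0 2 k f 0 0) :
    cosetProd k f =o[atImInfty] discriminant := by
  have hO := hf.isBigO_exp.trans exp_isBigO_discriminant
  have hS := (Asymptotics.isLittleO_one_iff ℂ).mpr hf.tendsto_zero
  have hST := (Asymptotics.isLittleO_one_iff ℂ).mpr hf.tendsto_slash_S_mul_T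
  simpa only [mul_one] using! (hO.mul_isLittleO hS).mul hST

theorem eq_zero (hk : k < 8) (hf : IsModularGamma0 2 k f 0 0) : f = 0 := by
  have hST : MDiff (f ∣[k] (S * T)) := hf.mdifferentiable.slash k (S * T : SL(2, ℤ))
  have hS : MDiff (f ∣[k] S) := hf.mdifferentiable.slash k S
  have hquot : cosetProd k f / discriminant = 0 := by
    refine eq_zero_of_slash_S_of_slash_T (k := k + k + k - 12) (by lia)
      (((hf.mdifferentiable.mul hS).mul hST).div CuspForm.discriminant.holo' discriminant_ne_zero)
      ?_ ?_ ?_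
    · rw [div_slash_SL2, cosetProd_slash_S hf, discriminant_S_invariant]
    · rw [div_slash_SL2, cosetProd_slash_T hf, discriminant_T_invariant]
    · exact (cosetProd_isLittleO_discriminant hf).tendsto_div_nhds_zero
  have hprod : cosetProd k f = 0 := by
    ext z
    simpa [discriminant_ne_zero] using congrFun hquot z
  rw [cosetProd, UpperHalfPlane.mul_eq_zero_iff (hf.mdifferentiable.mul hS) hST,
    UpperHalfPlane.mul_eq_zero_iff hf.mdifferentiable hS, SL_slash, SL_slash,
    SlashAction.slash_eq_zero_iff, SlashAction.slash_eq_zero_iff, or_self, or_self] at hprod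
  exact hprod

theorem unique (hk : k < 8) (hf : IsModularGamma0 2 k f a b) (hg : IsModularGamma0 2 k g a b) :
    f = g := by
  have h := hf.sub hg
  rw [sub_self, sub_self] at h
  exact sub_eq_zero.mp (h.eq_zero hk)

end IsModularGamma0

/-! ### Level raising -/

/-- The matrix `diag(a, d)`. Up to a power of `N`, slashing with `diag(N, 1)` is the level-raising
operator `f(τ) ↦ f(Nτ)`. -/
def diagGL (a d : ℕ) [NeZero a] [NeZero d] : GL (Fin 2) ℝ :=
  .mkOfDetNeZero !![(a : ℝ), 0; 0, (d : ℝ)] (by simp [NeZero.ne])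

section diagGL

variable {N a d : ℕ} [NeZero N] [NeZero a] [NeZero d] {f : ℍ → ℂ}

@[simp]
lemma coe_diagGL : (diagGL a d : Matrix (Fin 2) (Fin 2) ℝ) = !![(a : ℝ), 0; 0, (d : ℝ)] := rfl

lemma det_diagGL : (diagGL a d).det.val = a * d := by
  simp [Matrix.GeneralLinearGroup.val_det_apply]

lemma det_diagGL_pos : 0 < (diagGL a d).det.val := by
  have := NeZero.pos a
  have := NeZero.pos d
  rw [det_diagGL]
  positivity

lemma slash_diagGL_apply (k : ℤ) (f : ℍ → ℂ) (z : ℍ) :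
    (f ∣[k] diagGL a d) z =
      f (diagGL a d • z) * ((a * d : ℝ) : ℂ) ^ (k - 1) * (d : ℂ) ^ (-k) := by
  rw [slash_apply, UpperHalfPlane.σ, if_pos det_diagGL_pos, abs_of_pos det_diagGL_pos, det_diagGL]
  simp [denom]

lemma coe_diagGL_smul (z : ℍ) : ((diagGL a d • z : ℍ) : ℂ) = a * z / d := by
  simp [coe_smul_of_det_pos det_diagGL_pos, num, denom]

lemma tendsto_slash_diagGL {c : ℂ} (hc : Tendsto f atImInfty (𝓝 c)) (k : ℤ) :
    Tendsto (f ∣[k] diagGL a d) atImInfty (𝓝 (c * (a : ℂ) ^ (k - 1) / d)) := by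
  convert tendsto_slash_atImInfty (g := diagGL a d) det_diagGL_pos (by simp) k hc using 2
  have hd : (d : ℂ) ≠ 0 := NeZero.ne _
  have h11 : (diagGL a d : GL (Fin 2) ℝ) 1 1 = d := by simp
  rw [det_diagGL, h11, ofReal_mul, ofReal_natCast, ofReal_natCast, mul_zpow, mul_assoc, mul_assoc,
    ← zpow_add₀ hd, sub_add_eq_add_sub, add_neg_cancel, zero_sub, zpow_neg_one, mul_div_assoc,
    div_eq_mul_inv]

lemma diagGL_mul_S : diagGL N 1 * S = S * diagGL 1 N := by
  ext i j
  fin_cases i <;> fin_cases j <;> simp [Matrix.mul_apply, Fin.sum_univ_two, coe_S]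

lemma exists_diagGL_mul_eq {γ : SL(2, ℤ)} (hγ : γ ∈ Gamma0 N) :
    ∃ γ' : SL(2, ℤ), diagGL N 1 * γ = γ' * diagGL N 1 := by
  obtain ⟨c, hc⟩ := (ZMod.intCast_zmod_eq_zero_iff_dvd _ N).mp (Gamma0_mem.mp hγ)
  have hdet := Matrix.det_fin_two γ.1
  rw [γ.2, hc] at hdet
  let γ' : SL(2, ℤ) := ⟨!![γ 0 0, N * γ 0 1; c, γ 1 1], by
    rw [Matrix.det_fin_two_of]
    linear_combination -hdet⟩
  have hγ' : (γ' : Matrix (Fin 2) (Fin 2) ℤ) = !![γ 0 0, N * γ 0 1; c, γ 1 1] := rfl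
  refine ⟨γ', ?_⟩
  ext i j
  fin_cases i <;> fin_cases j <;>
    simp [Matrix.mul_apply, Fin.sum_univ_two, hγ', hc, mul_comm]

lemma slash_diagGL_slash {k : ℤ} {γ γ' : SL(2, ℤ)} (hf : f ∣[k] γ' = f)
    (h : diagGL N 1 * γ = γ' * diagGL a d) :
    (f ∣[k] diagGL N 1) ∣[k] γ = f ∣[k] diagGL a d := by
  rw [SL_slash, ← SlashAction.slash_mul, h, SlashAction.slash_mul, ← SL_slash, hf]

lemma D2_slash_diagGL {γ γ' : SL(2, ℤ)} (h : diagGL N 1 * γ = γ' * diagGL a d) :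
    D2 γ' ∣[(2 : ℤ)] diagGL a d = D2 γ := by
  have h10 : (γ 1 0 : ℂ) = γ' 1 0 * a := by
    simpa [Matrix.mul_apply, Fin.sum_univ_two] using
      congrArg (fun g : GL (Fin 2) ℝ ↦ (g 1 0 : ℂ)) h
  have h11 : (γ 1 1 : ℂ) = γ' 1 1 * d := by
    simpa [Matrix.mul_apply, Fin.sum_univ_two] using
      congrArg (fun g : GL (Fin 2) ℝ ↦ (g 1 1 : ℂ)) h
  have hd : (d : ℂ) ≠ 0 := NeZero.ne _
  ext z
  have hz := denom_ne_zero γ z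
  rw [denom_apply, h10, h11] at hz
  have hz' : (γ' 1 0 : ℂ) * (a * z / d) + γ' 1 1 ≠ 0 := by
    intro h0
    apply hz
    field_simp at h0
    linear_combination h0
  rw [slash_diagGL_apply, D2, D2, denom_apply, denom_apply, coe_diagGL_smul, h10, h11,
    show (2 : ℤ) - 1 = 1 from rfl, zpow_one, zpow_neg, zpow_ofNat]
  push_cast
  field_simp [hz']

lemma E2_slash_diagGL_sub_slash {γ γ' : SL(2, ℤ)} (h : diagGL N 1 * γ = γ' * diagGL a d) :
    (E2 ∣[(2 : ℤ)] diagGL N 1 - E2) ∣[(2 : ℤ)] γ = E2 ∣[(2 : ℤ)] diagGL a d - E2 := by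
  have hN : (E2 ∣[(2 : ℤ)] diagGL N 1) ∣[(2 : ℤ)] γ =
      E2 ∣[(2 : ℤ)] diagGL a d - (1 / (2 * riemannZeta 2)) • D2 γ := by
    rw [SL_slash, ← SlashAction.slash_mul, h, SlashAction.slash_mul, ← SL_slash, E2_slash_action,
      sub_eq_add_neg, SlashAction.add_slash, SlashAction.neg_slash, smul_slash,
      UpperHalfPlane.σ, if_pos det_diagGL_pos, D2_slash_diagGL h]
    exact (sub_eq_add_neg _ _).symm
  rw [sub_eq_add_neg, SlashAction.add_slash, SlashAction.neg_slash, hN, E2_slash_action]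
  abel

end diagGL

namespace IsModularGamma0

variable {N : ℕ} {k : ℤ} {f : ℍ → ℂ} {c : ℂ}

lemma of_levelOne (hf : MDiff f) (hk : ∀ γ : SL(2, ℤ), f ∣[k] γ = f)
    (hc : Tendsto f atImInfty (𝓝 c)) : IsModularGamma0 N k f c c where
  mdifferentiable := hf
  slash_eq γ _ := hk γ
  tendsto_infty := hc
  tendsto_zero := by rwa [hk]

variable [NeZero N]

lemma slash_diagGL (hf : MDiff f) (hk : ∀ γ : SL(2, ℤ), f ∣[k] γ = f)
    (hc : Tendsto f atImInfty (𝓝 c)) :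
    IsModularGamma0 N k (f ∣[k] diagGL N 1) (c * (N : ℂ) ^ (k - 1)) (c / N) where
  mdifferentiable := hf.slash k _
  slash_eq γ hγ := by
    obtain ⟨γ', h⟩ := exists_diagGL_mul_eq hγ
    exact slash_diagGL_slash (hk γ') h
  tendsto_infty := by simpa using tendsto_slash_diagGL (a := N) (d := 1) hc k
  tendsto_zero := by
    rw [slash_diagGL_slash (hk S) diagGL_mul_S]
    simpa using tendsto_slash_diagGL (a := 1) (d := N) hc k

lemma E2_slash_diagGL_sub :
    IsModularGamma0 N 2 (E2 ∣[(2 : ℤ)] diagGL N 1 - E2) (N - 1) (1 / N - 1) where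
  mdifferentiable := (E2_mdifferentiable.slash 2 _).sub E2_mdifferentiable
  slash_eq γ hγ := by
    obtain ⟨γ', h⟩ := exists_diagGL_mul_eq hγ
    exact E2_slash_diagGL_sub_slash h
  tendsto_infty := by
    simpa using! (tendsto_slash_diagGL (a := N) (d := 1) tendsto_E2_atImInfty 2).sub
      tendsto_E2_atImInfty
  tendsto_zero := by
    rw [E2_slash_diagGL_sub_slash diagGL_mul_S]
    simpa using! (tendsto_slash_diagGL (a := 1) (d := N) tendsto_E2_atImInfty 2).sub
      tendsto_E2_atImInfty

end IsModularGamma0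

/-! ### The Serre derivative of `E₂` -/

lemma D2_eq_smul_slash (γ : SL(2, ℤ)) :
    D2 γ = (2 * Real.pi * I * γ 1 0) • ((1 : ℍ → ℂ) ∣[(1 : ℤ)] γ) := by
  ext z
  simp [D2, SL_slash_apply, div_eq_mul_inv]

lemma mdifferentiable_D2 (γ : SL(2, ℤ)) : MDiff (D2 γ) := by
  rw [D2_eq_smul_slash]
  exact (MDifferentiable.slash mdifferentiable_const 1 _).const_smul _

lemma normalizedDerivOfComplex_D2 (γ : SL(2, ℤ)) :
    D (D2 γ) = (4 * Real.pi ^ 2 : ℂ)⁻¹ • (D2 γ * D2 γ) := by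
  have h1 : MDiff (1 : ℍ → ℂ) := mdifferentiable_const
  have hslash : MDiff ((1 : ℍ → ℂ) ∣[(1 : ℤ)] γ) := h1.slash 1 _
  have hD : D (1 : ℍ → ℂ) = 0 := normalizedDerivOfComplex_const 1
  rw [D2_eq_smul_slash, normalizedDerivOfComplex_smul _ _ hslash,
    normalizedDerivOfComplex_SL_slash h1, hD]
  ext z
  simp only [SL_slash_apply, SlashAction.zero_slash, Pi.smul_apply, Pi.sub_apply, Pi.mul_apply,
    Pi.zero_apply, Pi.one_apply, smul_eq_mul, Int.cast_one, zpow_neg, zpow_one]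
  field_simp
  linear_combination -4 * (γ 1 0 : ℂ) ^ 2 * I_sq

lemma serreDerivative_one_E2_eq_sub : serreDerivative 1 E2 = D E2 - (12⁻¹ : ℂ) • (E2 * E2) := by
  ext z
  simp [serreDerivative_apply, mul_assoc]

lemma serreDerivative_one_E2_slash (γ : SL(2, ℤ)) :
    serreDerivative 1 E2 ∣[(4 : ℤ)] γ = serreDerivative 1 E2 := by
  have hζ : MDiff ((1 / (2 * riemannZeta 2)) • D2 γ) := (mdifferentiable_D2 γ).const_smul _
  have hD := normalizedDerivOfComplex_SL_slash (k := 2) E2_mdifferentiable (γ := γ)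
  rw [E2_slash_action, normalizedDerivOfComplex_sub _ _ E2_mdifferentiable hζ,
    normalizedDerivOfComplex_smul _ _ (mdifferentiable_D2 γ), normalizedDerivOfComplex_D2] at hD
  have hE2 := mul_slash_SL2 2 2 γ E2 E2
  rw [E2_slash_action] at hE2
  rw [serreDerivative_one_E2_eq_sub, sub_eq_add_neg, SlashAction.add_slash, SlashAction.neg_slash,
    ModularForm.SL_smul_slash]
  simp only [Int.reduceAdd] at hE2 hD
  rw [hE2, eq_add_of_sub_eq hD.symm]
  ext z
  simp only [riemannZeta_two, D2, Pi.sub_apply, Pi.smul_apply, Pi.add_apply, Pi.mul_apply,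
    Pi.neg_apply, smul_eq_mul, Int.cast_ofNat, mul_inv, inv_I]
  field_simp
  ring

/-! ### The differential system in level two -/

/-- The weight-two Eisenstein series `2 E₂(2τ) - E₂(τ)` of `Γ₀(2)`. -/
def eisensteinTwo : ℍ → ℂ := E2 ∣[(2 : ℤ)] diagGL 2 1 - E2

/-- The weight-four Eisenstein series `(16 E₄(2τ) - E₄(τ)) / 15` of `Γ₀(2)`, which has the value `1`
at `∞` and vanishes at the cusp `0`. -/
def eisensteinFour : ℍ → ℂ :=
  (15⁻¹ : ℂ) • ((2 : ℂ) • (⇑E₄ ∣[(4 : ℤ)] diagGL 2 1) - ⇑E₄)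

lemma isModularGamma0_eisensteinTwo : IsModularGamma0 2 2 eisensteinTwo 1 (-1 / 2) := by
  rw [eisensteinTwo]
  convert IsModularGamma0.E2_slash_diagGL_sub (N := 2) using 1 <;> norm_num

lemma isModularGamma0_eisensteinFour : IsModularGamma0 2 4 eisensteinFour 1 0 := by
  have hE4 (γ : SL(2, ℤ)) : (⇑E₄ ∣[(4 : ℤ)] γ) = ⇑E₄ :=
    E₄.slash_action_eq' _ ⟨γ, rfl⟩
  have hlim : Tendsto E₄ atImInfty (𝓝 1) := tendsto_E_atImInfty (by norm_num) (by decide)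
  have h1 := IsModularGamma0.of_levelOne (N := 2) E₄.holo' hE4 hlim
  have h2 := IsModularGamma0.slash_diagGL (N := 2) E₄.holo' hE4 hlim
  rw [eisensteinFour]
  convert ((h2.const_smul 2).sub h1).const_smul 15⁻¹ using 1 <;> norm_num

lemma serreDerivative_eisensteinTwo : serreDerivative 2 eisensteinTwo =
    (3⁻¹ : ℂ) • (eisensteinTwo * eisensteinTwo) - (2⁻¹ : ℂ) • eisensteinFour := by
  have he := isModularGamma0_eisensteinTwo
  have hQ := isModularGamma0_eisensteinFour
  refine IsModularGamma0.unique (by norm_num) he.serreDerivative ?_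
  convert ((he.mul he).const_smul 3⁻¹).sub (hQ.const_smul 2⁻¹) using 1 <;> norm_num

lemma serreDerivative_eisensteinFour : serreDerivative 4 eisensteinFour =
    (-3⁻¹ : ℂ) • (eisensteinTwo * eisensteinFour) := by
  have he := isModularGamma0_eisensteinTwo
  have hQ := isModularGamma0_eisensteinFour
  refine IsModularGamma0.unique (by norm_num) hQ.serreDerivative ?_
  convert ((he.mul hQ).const_smul (-3⁻¹)) using 1 <;> norm_num

lemma isModularGamma0_serreDerivative_one_E2 :
    IsModularGamma0 2 4 (serreDerivative 1 E2) (-1 / 12) (-1 / 12) := by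
  refine IsModularGamma0.of_levelOne (serreDerivative_mdifferentiable 1 E2_mdifferentiable)
    serreDerivative_one_E2_slash ?_
  simpa using tendsto_serreDerivative_atImInfty E2_mdifferentiable tendsto_E2_atImInfty 1

lemma serreDerivative_one_E2 : serreDerivative 1 E2 =
    (4⁻¹ : ℂ) • eisensteinFour - (3⁻¹ : ℂ) • (eisensteinTwo * eisensteinTwo) := by
  have he := isModularGamma0_eisensteinTwo
  have hQ := isModularGamma0_eisensteinFour
  refine IsModularGamma0.unique (by norm_num) isModularGamma0_serreDerivative_one_E2 ?_
  convert (hQ.const_smul 4⁻¹).sub ((he.mul he).const_smul 3⁻¹) using 1 <;> norm_num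

/-- The weight-four Eisenstein series of `Γ₀(2)` at the cusp `0`, up to scaling: it vanishes at `∞`
but not at `0`. -/
def eisensteinFourZero : ℍ → ℂ := eisensteinTwo * eisensteinTwo - eisensteinFour

/-- The quasimodular form `2 E₂(τ) - 2 E₂(2τ)` of weight two, which is `3` times the logarithmic
derivative of `eisensteinFour`. -/
def quasimodularTwo : ℍ → ℂ := E2 - eisensteinTwo

lemma eisensteinTwo_mdifferentiable : MDiff eisensteinTwo :=
  isModularGamma0_eisensteinTwo.mdifferentiable

lemma eisensteinFour_mdifferentiable : MDiff eisensteinFour :=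
  isModularGamma0_eisensteinFour.mdifferentiable

lemma eisensteinFourZero_mdifferentiable : MDiff eisensteinFourZero :=
  (eisensteinTwo_mdifferentiable.mul eisensteinTwo_mdifferentiable).sub
    eisensteinFour_mdifferentiable

lemma quasimodularTwo_mdifferentiable : MDiff quasimodularTwo :=
  E2_mdifferentiable.sub eisensteinTwo_mdifferentiable

lemma normalizedDerivOfComplex_eisensteinTwo : D eisensteinTwo =
    (6⁻¹ : ℂ) • (quasimodularTwo * eisensteinTwo) + (2⁻¹ : ℂ) • eisensteinFourZero := by
  ext z
  have h := congrFun serreDerivative_eisensteinTwo z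
  rw [serreDerivative_apply] at h
  simp only [quasimodularTwo, eisensteinFourZero, Pi.add_apply, Pi.sub_apply, Pi.smul_apply,
    Pi.mul_apply, smul_eq_mul] at h ⊢
  linear_combination h

lemma normalizedDerivOfComplex_eisensteinFour :
    D eisensteinFour = (3⁻¹ : ℂ) • (quasimodularTwo * eisensteinFour) := by
  ext z
  have h := congrFun serreDerivative_eisensteinFour z
  rw [serreDerivative_apply] at h
  simp only [quasimodularTwo, Pi.sub_apply, Pi.smul_apply, Pi.mul_apply, smul_eq_mul] at h ⊢
  linear_combination h

lemma normalizedDerivOfComplex_eisensteinFourZero : D eisensteinFourZero =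
    eisensteinFourZero * ((3⁻¹ : ℂ) • quasimodularTwo + eisensteinTwo) := by
  have he := eisensteinTwo_mdifferentiable
  rw [eisensteinFourZero,
    normalizedDerivOfComplex_sub _ _ (he.mul he) eisensteinFour_mdifferentiable,
    normalizedDerivOfComplex_mul _ _ he he, normalizedDerivOfComplex_eisensteinTwo,
    normalizedDerivOfComplex_eisensteinFour]
  ext z
  simp only [eisensteinFourZero, Pi.add_apply, Pi.sub_apply, Pi.smul_apply, Pi.mul_apply,
    smul_eq_mul]
  ring

lemma normalizedDerivOfComplex_quasimodularTwo : D quasimodularTwo =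
    (12⁻¹ : ℂ) • (quasimodularTwo * quasimodularTwo - (9 : ℂ) • eisensteinFourZero) := by
  rw [quasimodularTwo,
    normalizedDerivOfComplex_sub _ _ E2_mdifferentiable eisensteinTwo_mdifferentiable,
    normalizedDerivOfComplex_eisensteinTwo]
  ext z
  have h := congrFun serreDerivative_one_E2 z
  rw [serreDerivative_apply] at h
  simp only [quasimodularTwo, eisensteinFourZero, Pi.add_apply, Pi.sub_apply, Pi.smul_apply,
    Pi.mul_apply, smul_eq_mul] at h ⊢
  linear_combination h

lemma normalizedDerivOfComplex_iterate_two_eisensteinFour : D (D eisensteinFour) =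
    (36⁻¹ : ℂ) • (eisensteinFour *
      ((5 : ℂ) • (quasimodularTwo * quasimodularTwo) - (9 : ℂ) • eisensteinFourZero)) := by
  have hu := quasimodularTwo_mdifferentiable
  have hQ := eisensteinFour_mdifferentiable
  rw [normalizedDerivOfComplex_eisensteinFour, normalizedDerivOfComplex_smul _ _ (hu.mul hQ),
    normalizedDerivOfComplex_mul _ _ hu hQ, normalizedDerivOfComplex_eisensteinFour,
    normalizedDerivOfComplex_quasimodularTwo]
  ext z
  simp only [Pi.add_apply, Pi.sub_apply, Pi.smul_apply, Pi.mul_apply, smul_eq_mul]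
  ring

lemma normalizedDerivOfComplex_iterate_three_eisensteinFour : D (D (D eisensteinFour)) =
    (72⁻¹ : ℂ) • (eisensteinFour * ((5 : ℂ) • quasimodularTwo ^ 3 -
      eisensteinFourZero * ((27 : ℂ) • quasimodularTwo + (18 : ℂ) • eisensteinTwo))) := by
  have hu := quasimodularTwo_mdifferentiable
  have hQ := eisensteinFour_mdifferentiable
  have hv := eisensteinFourZero_mdifferentiable
  have hu5 := (hu.mul hu).const_smul (5 : ℂ)
  have hv9 := hv.const_smul (9 : ℂ)
  rw [normalizedDerivOfComplex_iterate_two_eisensteinFour,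
    normalizedDerivOfComplex_smul _ _ (hQ.mul (hu5.sub hv9)),
    normalizedDerivOfComplex_mul _ _ hQ (hu5.sub hv9), normalizedDerivOfComplex_sub _ _ hu5 hv9,
    normalizedDerivOfComplex_smul _ _ (hu.mul hu), normalizedDerivOfComplex_smul _ _ hv,
    normalizedDerivOfComplex_mul _ _ hu hu, normalizedDerivOfComplex_eisensteinFour,
    normalizedDerivOfComplex_quasimodularTwo, normalizedDerivOfComplex_eisensteinFourZero]
  ext z
  simp only [Pi.add_apply, Pi.sub_apply, Pi.smul_apply, Pi.mul_apply, Pi.pow_apply, smul_eq_mul]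
  ring

/-! ### Comparison with `EQ` and `nderiv` -/

lemma tsum_neg_one_pow_mul {R : Type*} [Ring R] [UniformSpace R] [IsUniformAddGroup R]
    [CompleteSpace R] [T2Space R] {f : ℕ → R} (hf : Summable f) :
    ∑' n, (-1) ^ n * f n = 2 * ∑' n, f (2 * n) - ∑' n, f n := by
  have heven : Summable fun n ↦ f (2 * n) := hf.comp_injective (mul_right_injective₀ two_ne_zero)
  have hodd : Summable fun n ↦ f (2 * n + 1) :=
    hf.comp_injective ((add_left_injective 1).comp (mul_right_injective₀ two_ne_zero))
  rw [← tsum_even_add_odd heven hodd, ← tsum_even_add_odd (f := fun n ↦ (-1) ^ n * f n)]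
  · simp only [pow_add, pow_mul, neg_one_sq, one_pow, one_mul, pow_one, neg_one_mul, tsum_neg]
    rw [two_mul]
    abel
  · simpa [pow_mul] using heven
  · simpa [pow_mul, pow_add] using hodd.neg

lemma E₄_eq_tsum (z : ℍ) : E₄ z = 1 + 240 * ∑' n : ℕ, n ^ 3 * qq z ^ n / (1 - qq z ^ n) := by
  have hq : ‖qq z‖ < 1 := norm_exp_two_pi_I_lt_one z
  have hE : E₄ z = 1 - 2 * 4 / bernoulli 4 * ∑' n : ℕ+, σ 3 n * qq z ^ (n : ℕ) :=
    q_expansion_bernoulli (k := 4) (by norm_num) (by decide) z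
  have hsum : Summable fun n : ℕ ↦ n ^ 3 * qq z ^ n / (1 - qq z ^ n) :=
    summable_norm_pow_mul_geometric_div_one_sub 3 hq
  rw [hE, ← tsum_zero_pnat_eq_tsum_nat hsum, bernoulli_eq_bernoulli'_of_ne_one (by norm_num),
    bernoulli'_four, ← tsum_pow_div_one_sub_eq_tsum_sigma hq 3]
  norm_num

lemma EQ_eq_tsum (z : ℍ) :
    EQ z = 1 + 16 * ∑' n : ℕ, (-1) ^ n * (n ^ 3 * qq z ^ n / (1 - qq z ^ n)) := by
  have hq : ‖qq z‖ < 1 := norm_exp_two_pi_I_lt_one z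
  have hsum : Summable fun n : ℕ ↦ (-1) ^ n * (n ^ 3 * qq z ^ n / (1 - qq z ^ n)) :=
    .of_norm <| (summable_norm_pow_mul_geometric_div_one_sub 3 hq).norm.congr fun n ↦ by simp
  rw [EQ, hsum.tsum_eq_zero_add]
  simp [mul_div_assoc, mul_assoc]

lemma EQ_comp_coe : EQ ∘ ((↑) : ℍ → ℂ) = eisensteinFour := by
  ext z
  have hq : ‖qq z‖ < 1 := norm_exp_two_pi_I_lt_one z
  have hq2 : qq (diagGL 2 1 • z : ℍ) = qq z ^ 2 := by
    rw [coe_diagGL_smul, qq, qq, ← Complex.exp_nat_mul]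
    congr 1
    push_cast
    ring
  rw [Function.comp_apply, EQ_eq_tsum,
    tsum_neg_one_pow_mul (summable_norm_pow_mul_geometric_div_one_sub 3 hq)]
  simp only [eisensteinFour, Pi.smul_apply, Pi.sub_apply, slash_diagGL_apply, E₄_eq_tsum, hq2,
    smul_eq_mul, ← pow_mul, Nat.cast_mul, mul_pow, mul_assoc, mul_div_assoc, tsum_mul_left]
  push_cast
  ring

lemma nderiv_comp_coe (F : ℂ → ℂ) : nderiv F ∘ ((↑) : ℍ → ℂ) = D (F ∘ (↑)) := by
  ext z
  have hF : F =ᶠ[𝓝 ↑z] (F ∘ (↑)) ∘ ofComplex := by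
    filter_upwards [isOpen_upperHalfPlaneSet.mem_nhds z.im_pos] with w hw
    rw [Function.comp_apply, Function.comp_apply, ofComplex_apply_of_im_pos hw]
  rw [Function.comp_apply, nderiv, normalizedDerivOfComplex, hF.deriv_eq]

/-- The weight-four Eisenstein series `𝒬` on `Γ₀(2)` satisfies a third-order nonlinear ODE. -/
theorem EQ_third_order_ODE :
    ∀ τ : ℂ, 0 < τ.im →
      4 * EQ τ ^ 4 * (nderiv (nderiv (nderiv EQ)) τ) ^ 2 -
      6 * EQ τ ^ 2 * nderiv EQ τ * (6 * EQ τ * nderiv (nderiv EQ) τ - 5 * (nderiv EQ τ) ^ 2) *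
        nderiv (nderiv (nderiv EQ)) τ +
      16 * EQ τ ^ 3 * (nderiv (nderiv EQ) τ) ^ 3 +
      EQ τ ^ 2 * (21 * (nderiv EQ τ) ^ 2 - 4 * EQ τ ^ 3) * (nderiv (nderiv EQ) τ) ^ 2 -
      10 * EQ τ * (nderiv EQ τ) ^ 2 * (6 * (nderiv EQ τ) ^ 2 - EQ τ ^ 3) *
        nderiv (nderiv EQ) τ +
      25 * (nderiv EQ τ) ^ 6 - (25 / 4) * EQ τ ^ 3 * (nderiv EQ τ) ^ 4 = 0 := by
  intro τ hτ
  lift τ to ℍ using hτ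
  have h1 : nderiv EQ ∘ (↑) = D eisensteinFour := by rw [nderiv_comp_coe, EQ_comp_coe]
  have h2 : nderiv (nderiv EQ) ∘ (↑) = D (D eisensteinFour) := by rw [nderiv_comp_coe, h1]
  have h3 : nderiv (nderiv (nderiv EQ)) ∘ (↑) = D (D (D eisensteinFour)) := by
    rw [nderiv_comp_coe, h2]
  have hτ0 : EQ τ = eisensteinFour τ := congrFun EQ_comp_coe τ
  have hτ1 : nderiv EQ τ = D eisensteinFour τ := congrFun h1 τ
  have hτ2 : nderiv (nderiv EQ) τ = D (D eisensteinFour) τ := congrFun h2 τ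
  have hτ3 : nderiv (nderiv (nderiv EQ)) τ = D (D (D eisensteinFour)) τ := congrFun h3 τ
  rw [hτ3, hτ2, hτ1, hτ0, normalizedDerivOfComplex_iterate_three_eisensteinFour,
    normalizedDerivOfComplex_iterate_two_eisensteinFour, normalizedDerivOfComplex_eisensteinFour]
  simp only [eisensteinFourZero, Pi.add_apply, Pi.sub_apply, Pi.smul_apply, Pi.mul_apply,
    Pi.pow_apply, smul_eq_mul]
  ring
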